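/- Let A and B be two nonempty sets of real numbers. Then A ∪ B is a B-set if and only if A + B is a B-set. -/

import Mathlib

/-!
Passing from `A ∪ B` to `A + B` is the inequality `|sin (s + t)| ≤ |sin s| + |sin t|`.

For the converse, the same inequality reduces the claim to Arbault's theorem that adding one point
`y` to a B-set `X` gives a B-set: adding some `a₀ ∈ A` and `b₀ ∈ B` to `A + B`, every `a ∈ A` is
`(a + b₀) - b₀` and every `b ∈ B` is `(a₀ + b) - a₀`.

To add a point `y`, let `a` be the weights witnessing that `X` is a B-set. By Abel–Dini there are
positive integers `N n`, of the size of the partial sums of `a`, such that `∑ a n / N n` diverges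
while `∑ a n / (N n)²` converges (`exists_abel_dini`). Dirichlet's approximation theorem gives
`1 ≤ k n ≤ N n` such that `k n * n * y` is within `1 / N n` of an integer. Put the weight
`a n / N n` on the frequency `k n * n`. The total weight is still infinite; at `x ∈ X` the bound
survives since `|sin (k θ)| ≤ k |sin θ|` and `k n ≤ N n`; at `y` the sum is at most
`π ∑ a n / (N n)²`. Different `n` may give the same frequency, so weights are added up along the
fibres of `n ↦ k n * n` (`pushWeight`).
-/

open Filter Real Set

/-- `X` is a B-set: there are positive reals `a` with divergent sum and `n₀ ∈ ℕ`
such that for all `x ∈ X`, `∑_{n > n₀} a n * |sin (π n x)|` converges and is `≤ n₀`. -/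
def IsBSet (X : Set ℝ) : Prop :=
  ∃ a : ℕ → ℝ, (∀ n, 0 < a n) ∧ ¬ Summable a ∧
    ∃ n₀ : ℕ, ∀ x ∈ X,
      (Summable fun n => a (n + n₀ + 1) * |Real.sin (π * (n + n₀ + 1 : ℕ) * x)|) ∧
      ∑' n, a (n + n₀ + 1) * |Real.sin (π * (n + n₀ + 1 : ℕ) * x)| ≤ n₀

/-- The variant of `IsBSet` with nonnegative weights, all frequencies `n ∈ ℕ`, an arbitrary real
bound `C`, and convergence expressed by boundedness of the partial sums. It is equivalent to
`IsBSet`. -/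
def HasBoundedSineSums (X : Set ℝ) : Prop :=
  ∃ a : ℕ → ℝ, (∀ n, 0 ≤ a n) ∧ ¬ Summable a ∧
    ∃ C : ℝ, ∀ x ∈ X, ∀ N : ℕ, ∑ n ∈ Finset.range N, a n * |sin (π * n * x)| ≤ C

theorem IsBSet.hasBoundedSineSums {X : Set ℝ} (h : IsBSet X) : HasBoundedSineSums X := by
  obtain ⟨a, ha, hs, n₀, h⟩ := h
  refine ⟨a, fun n => (ha n).le, hs, ∑ n ∈ Finset.range (n₀ + 1), a n + n₀, fun x hx N => ?_⟩
  obtain ⟨h1, h2⟩ := h x hx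
  have h3 : ∑ n ∈ Finset.range N, a n * |sin (π * n * x)|
      ≤ ∑ n ∈ Finset.range (n₀ + 1 + N), a n * |sin (π * n * x)| :=
    Finset.sum_le_sum_of_subset_of_nonneg (Finset.range_mono (by omega))
      fun n _ _ => mul_nonneg (ha n).le (abs_nonneg _)
  rw [Finset.sum_range_add] at h3
  have h4 : ∑ n ∈ Finset.range (n₀ + 1), a n * |sin (π * n * x)|
      ≤ ∑ n ∈ Finset.range (n₀ + 1), a n :=
    Finset.sum_le_sum fun n _ => mul_le_of_le_one_right (ha n).le (abs_sin_le_one _)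
  have h5 := h1.sum_le_tsum (Finset.range N) fun n _ => mul_nonneg (ha _).le (abs_nonneg _)
  have h6 : ∑ n ∈ Finset.range N, a (n₀ + 1 + n) * |sin (π * (n₀ + 1 + n : ℕ) * x)|
      = ∑ n ∈ Finset.range N, a (n + n₀ + 1) * |sin (π * (n + n₀ + 1 : ℕ) * x)| :=
    Finset.sum_congr rfl fun n _ => by rw [show n₀ + 1 + n = n + n₀ + 1 by ring]
  linarith

theorem HasBoundedSineSums.isBSet {X : Set ℝ} (h : HasBoundedSineSums X) : IsBSet X := by
  obtain ⟨a, ha, hs, C, h⟩ := h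
  have hgeo : Summable fun n : ℕ => ((1 : ℝ) / 2) ^ n := summable_geometric_two
  -- A geometric series makes the weights strictly positive and adds at most `2` to each sum.
  refine ⟨fun n => a n + (1 / 2) ^ n, fun n => add_pos_of_nonneg_of_pos (ha n) (by positivity),
    fun hc => hs (by simpa using hc.sub hgeo), ⌈C + 2⌉₊, fun x hx => ?_⟩
  set n₀ := ⌈C + 2⌉₊
  set F : ℕ → ℝ := fun n => (a n + (1 / 2) ^ n) * |sin (π * n * x)| with hF
  have hF0 : ∀ n, 0 ≤ F n := fun n =>
    mul_nonneg (add_nonneg (ha n) (by positivity)) (abs_nonneg _)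
  have hb : ∀ N, ∑ n ∈ Finset.range N, F n ≤ C + 2 := by
    intro N
    have h1 := hgeo.sum_le_tsum (Finset.range N) fun n _ => by positivity
    rw [tsum_geometric_two] at h1
    have h2 : ∑ n ∈ Finset.range N, (1 / 2 : ℝ) ^ n * |sin (π * n * x)|
        ≤ ∑ n ∈ Finset.range N, (1 / 2 : ℝ) ^ n :=
      Finset.sum_le_sum fun n _ => mul_le_of_le_one_right (by positivity) (abs_sin_le_one _)
    have h3 := h x hx N
    simp only [hF, add_mul, Finset.sum_add_distrib]
    linarith
  have hb' : ∀ N, ∑ n ∈ Finset.range N, F (n + n₀ + 1) ≤ n₀ := by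
    intro N
    have h1 := hb (n₀ + 1 + N)
    rw [Finset.sum_range_add] at h1
    have h2 := Finset.sum_nonneg fun n (_ : n ∈ Finset.range (n₀ + 1)) => hF0 n
    have h3 : ∑ n ∈ Finset.range N, F (n₀ + 1 + n) = ∑ n ∈ Finset.range N, F (n + n₀ + 1) :=
      Finset.sum_congr rfl fun n _ => by rw [show n₀ + 1 + n = n + n₀ + 1 by ring]
    have h4 : C + 2 ≤ (n₀ : ℝ) := Nat.le_ceil _
    linarith
  exact ⟨summable_of_sum_range_le (fun n => hF0 _) hb',
    Real.tsum_le_of_sum_range_le (fun n => hF0 _) hb'⟩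

/-- The property passes from `Y` to `Z` when the sines at each point of `Z` are dominated by those
at two points of `Y`, as happens for sums and differences of points of `Y`. -/
theorem HasBoundedSineSums.of_le_add {Y Z : Set ℝ} (h : HasBoundedSineSums Y)
    (hZ : ∀ z ∈ Z, ∃ u ∈ Y, ∃ v ∈ Y, ∀ n : ℕ,
      |sin (π * n * z)| ≤ |sin (π * n * u)| + |sin (π * n * v)|) : HasBoundedSineSums Z := by
  obtain ⟨a, ha, hs, C, h⟩ := h
  refine ⟨a, ha, hs, C + C, fun z hz N => ?_⟩
  obtain ⟨u, hu, v, hv, huv⟩ := hZ z hz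
  refine le_trans ?_ (add_le_add (h u hu N) (h v hv N))
  rw [← Finset.sum_add_distrib]
  refine Finset.sum_le_sum fun n _ => ?_
  rw [← mul_add]
  exact mul_le_mul_of_nonneg_left (huv n) (ha n)

theorem abs_sin_add_le' (s t : ℝ) : |sin (s + t)| ≤ |sin s| + |sin t| := by
  rw [sin_add]
  refine (abs_add_le _ _).trans (add_le_add ?_ ?_) <;> rw [abs_mul]
  · exact mul_le_of_le_one_right (abs_nonneg _) (abs_cos_le_one _)
  · exact mul_le_of_le_one_left (abs_nonneg _) (abs_cos_le_one _)

theorem abs_sin_sub_le' (s t : ℝ) : |sin (s - t)| ≤ |sin s| + |sin t| := by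
  simpa [sub_eq_add_neg] using abs_sin_add_le' s (-t)

theorem abs_sin_natCast_mul_le (k : ℕ) (t : ℝ) : |sin (k * t)| ≤ k * |sin t| := by
  induction k with
  | zero => simp
  | succ k ih =>
    push_cast
    rw [add_mul, add_mul, one_mul, one_mul]
    exact (abs_sin_add_le' _ _).trans (by gcongr)

theorem abs_sin_pi_mul_le (t : ℝ) (m : ℤ) : |sin (π * t)| ≤ π * |t - m| := by
  have h : |sin (π * t)| = |sin (π * (t - m))| := by
    rw [show π * (t - m) = π * t - m * π by ring, sin_sub_int_mul_pi, abs_mul]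
    simp
  rw [h]
  refine abs_sin_le_abs.trans_eq ?_
  rw [abs_mul, abs_of_pos pi_pos]

/-- The Abel–Dini theorem with integer denominators `N n` comparable to the partial sums
`1 + a 0 + ⋯ + a n`. -/
theorem exists_abel_dini {a : ℕ → ℝ} (ha : ∀ n, 0 ≤ a n) (hs : ¬ Summable a) :
    ∃ N : ℕ → ℕ, (∀ n, 0 < N n) ∧ ¬ Summable (fun n => a n / N n) ∧
      Summable (fun n => a n / (N n : ℝ) ^ 2) := by
  set T : ℕ → ℝ := fun M => 1 + ∑ i ∈ Finset.range M, a i with hT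
  have hTs : ∀ n, T (n + 1) = T n + a n := fun n => by
    simp only [hT, Finset.sum_range_succ]; ring
  have hTm : Monotone T := monotone_nat_of_le_succ fun n => by rw [hTs]; linarith [ha n]
  have hT1 : ∀ n, 1 ≤ T n := fun n => by simpa [hT] using hTm (Nat.zero_le n)
  have hN1 : ∀ n, T (n + 1) ≤ (⌈T (n + 1)⌉₊ : ℝ) := fun n => Nat.le_ceil _
  have hN2 : ∀ n, (⌈T (n + 1)⌉₊ : ℝ) ≤ 2 * T (n + 1) := fun n => by
    linarith [Nat.ceil_lt_add_one (zero_le_one.trans (hT1 (n + 1))), hT1 (n + 1)]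
  refine ⟨fun n => ⌈T (n + 1)⌉₊, fun n => Nat.ceil_pos.2 (by linarith [hT1 (n + 1)]), ?_, ?_⟩
  · intro hsum
    have hb : Summable fun n => a n / T (n + 1) := by
      refine Summable.of_nonneg_of_le (fun n => div_nonneg (ha n) (by linarith [hT1 (n + 1)]))
        (fun n => ?_) (hsum.mul_left 2)
      have := hT1 (n + 1)
      have h1 := hN1 n
      rw [← mul_div_assoc, div_le_div_iff₀ (by linarith) (by linarith)]
      nlinarith [mul_le_mul_of_nonneg_left (hN2 n) (ha n)]
    obtain ⟨m, hm⟩ := Metric.cauchySeq_iff'.1 hb.hasSum.tendsto_sum_nat.cauchySeq (1 / 2)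
      (by norm_num)
    -- Past `m` the partial sums `T M` can at most double, contradicting divergence of `∑ a n`.
    have hbd : ∀ M, T M ≤ 2 * T m := by
      intro M
      rcases le_total M m with hMm | hMm
      · linarith [hTm hMm, hT1 m]
      have h1 := hm M hMm
      rw [Real.dist_eq, ← Finset.sum_Ico_eq_sub _ hMm] at h1
      have h2 := (abs_lt.1 h1).2
      have h3 : T M - T m = ∑ n ∈ Finset.Ico m M, a n := by
        rw [Finset.sum_Ico_eq_sub _ hMm]; simp only [hT]; ring
      have h4 : ∑ n ∈ Finset.Ico m M, a n ≤ (∑ n ∈ Finset.Ico m M, a n / T (n + 1)) * T M := by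
        rw [Finset.sum_mul]
        refine Finset.sum_le_sum fun n hn => ?_
        have h5 : T (n + 1) ≤ T M := hTm (Finset.mem_Ico.1 hn).2
        have h6 := hT1 (n + 1)
        rw [div_mul_eq_mul_div, le_div_iff₀ (by linarith)]
        exact mul_le_mul_of_nonneg_left h5 (ha n)
      nlinarith [hT1 M]
    exact hs (summable_of_sum_range_le ha (c := 2 * T m) fun M => by
      have := hbd M
      simp only [hT] at this ⊢
      linarith)
  · refine summable_of_sum_range_le (c := 1) (fun n => div_nonneg (ha n) (by positivity))
      fun M => ?_
    have hle : ∀ n, a n / (⌈T (n + 1)⌉₊ : ℝ) ^ 2 ≤ 1 / T n - 1 / T (n + 1) := fun n => by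
      have h1 := hT1 n
      have h2 := hT1 (n + 1)
      have h3 : T n ≤ T (n + 1) := hTm n.le_succ
      have h4 : 1 / T n - 1 / T (n + 1) = a n / (T n * T (n + 1)) := by
        rw [div_sub_div _ _ (by linarith) (by linarith), hTs]; ring
      rw [h4]
      have h5 : T n * T (n + 1) ≤ (⌈T (n + 1)⌉₊ : ℝ) ^ 2 := by
        nlinarith [hN1 n]
      exact div_le_div_of_nonneg_left (ha n) (by nlinarith) h5
    refine (Finset.sum_le_sum fun n _ => hle n).trans ?_
    rw [Finset.sum_range_sub' (fun n => 1 / T n)]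
    have h0 : T 0 = 1 := by simp [hT]
    have : 0 ≤ 1 / T M := div_nonneg zero_le_one (by linarith [hT1 M])
    rw [h0]; linarith

/-- The image of the weights `c` under `g : ℕ → ℕ`: the weight at `m` is the sum of `c n` over
the fibre `g n = m`. Only `n ≤ m` are searched, which is the whole fibre when `n ≤ g n` for all
`n`. -/
def pushWeight (c : ℕ → ℝ) (g : ℕ → ℕ) (m : ℕ) : ℝ :=
  ∑ n ∈ Finset.range (m + 1) with g n = m, c n

theorem sum_pushWeight_mul {g : ℕ → ℕ} (hg : ∀ n, n ≤ g n) (c f : ℕ → ℝ) (M : ℕ) :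
    ∑ m ∈ Finset.range M, pushWeight c g m * f m
      = ∑ n ∈ Finset.range M with g n < M, c n * f (g n) := by
  rw [← Finset.sum_fiberwise_of_maps_to (s := {n ∈ Finset.range M | g n < M})
    (t := Finset.range M) (g := g) (fun n hn => by simpa using (Finset.mem_filter.1 hn).2)]
  refine Finset.sum_congr rfl fun m hm => ?_
  rw [pushWeight, Finset.sum_mul]
  refine Finset.sum_congr ?_ fun n hn => by rw [(Finset.mem_filter.1 hn).2]
  ext n
  have := hg n
  simp only [Finset.mem_filter, Finset.mem_range] at hm ⊢
  constructor
  · rintro ⟨h1, h2⟩; omega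
  · rintro ⟨h1, h2⟩; omega

theorem not_summable_pushWeight {c : ℕ → ℝ} {g : ℕ → ℕ} (hg : ∀ n, n ≤ g n)
    (hc : ∀ n, 0 ≤ c n) (hs : ¬ Summable c) : ¬ Summable (pushWeight c g) := by
  intro h
  refine hs (summable_of_sum_range_le hc (c := ∑' m, pushWeight c g m) fun K => ?_)
  refine le_trans ?_ (h.sum_le_tsum (Finset.range ((Finset.range K).sup g + 1))
    fun m _ => Finset.sum_nonneg fun n _ => hc n)
  have h1 := sum_pushWeight_mul hg c (fun _ => 1) ((Finset.range K).sup g + 1)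
  simp only [mul_one] at h1
  rw [h1]
  refine Finset.sum_le_sum_of_subset_of_nonneg (fun n hn => ?_) fun n _ _ => hc n
  have h2 : g n ≤ (Finset.range K).sup g := Finset.le_sup hn
  have h3 := hg n
  simp only [Finset.mem_filter, Finset.mem_range]
  omega

/-- Arbault's theorem: adding a point preserves the property. -/
theorem HasBoundedSineSums.insert {X : Set ℝ} (h : HasBoundedSineSums X) (y : ℝ) :
    HasBoundedSineSums (insert y X) := by
  obtain ⟨a, ha, hs, C, h⟩ := h
  obtain ⟨N, hN, hN1, hN2⟩ := exists_abel_dini ha hs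
  choose k hk0 hkN hk using fun n : ℕ => Real.exists_nat_abs_mul_sub_round_le (n * y) (hN n)
  have hg : ∀ n, n ≤ k n * n := fun n => Nat.le_mul_of_pos_left n (hk0 n)
  have hc : ∀ n, 0 ≤ a n / N n := fun n => div_nonneg (ha n) (Nat.cast_nonneg _)
  refine ⟨pushWeight (fun n => a n / N n) (fun n => k n * n),
    fun m => Finset.sum_nonneg fun n _ => hc n, not_summable_pushWeight hg hc hN1,
    max (π * ∑' n, a n / (N n : ℝ) ^ 2) C, fun x hx M => ?_⟩
  rw [sum_pushWeight_mul hg _ (fun m => |sin (π * m * x)|)]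
  refine (Finset.sum_le_sum_of_subset_of_nonneg (Finset.filter_subset _ _)
    fun n _ _ => mul_nonneg (hc n) (abs_nonneg _)).trans ?_
  have hNR : ∀ n, (0 : ℝ) < N n := fun n => Nat.cast_pos.2 (hN n)
  rcases hx with rfl | hx
  · refine le_trans ?_ (le_max_left _ _)
    refine le_trans ?_ (mul_le_mul_of_nonneg_left
      (hN2.sum_le_tsum (Finset.range M) fun n _ => div_nonneg (ha n) (by positivity)) pi_pos.le)
    rw [Finset.mul_sum]
    refine Finset.sum_le_sum fun n _ => ?_
    have h1 : |sin (π * (k n * n : ℕ) * x)| ≤ π * (1 / N n) := by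
      have h2 := abs_sin_pi_mul_le (k n * (n * x)) (round (k n * (n * x)))
      rw [show π * (k n * n : ℕ) * x = π * (k n * (n * x)) by push_cast; ring]
      refine h2.trans (mul_le_mul_of_nonneg_left ((hk n).trans ?_) pi_pos.le)
      exact one_div_le_one_div_of_le (hNR n) (by linarith)
    refine (mul_le_mul_of_nonneg_left h1 (hc n)).trans_eq ?_
    have := (hNR n).ne'
    field_simp
  · refine le_trans ?_ ((h x hx M).trans (le_max_right _ _))
    refine Finset.sum_le_sum fun n _ => ?_
    have h1 : |sin (π * (k n * n : ℕ) * x)| ≤ N n * |sin (π * n * x)| := by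
      rw [show π * (k n * n : ℕ) * x = k n * (π * n * x) by push_cast; ring]
      exact (abs_sin_natCast_mul_le _ _).trans
        (mul_le_mul_of_nonneg_right (Nat.cast_le.2 (hkN n)) (abs_nonneg _))
    refine (mul_le_mul_of_nonneg_left h1 (hc n)).trans_eq ?_
    have := (hNR n).ne'
    field_simp

open Pointwise in
theorem bset_union_iff_sum (A B : Set ℝ) (hA : A.Nonempty) (hB : B.Nonempty) :
    IsBSet (A ∪ B) ↔ IsBSet (A + B) := by
  constructor
  · intro h
    refine (h.hasBoundedSineSums.of_le_add ?_).isBSet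
    rintro _ ⟨u, hu, v, hv, rfl⟩
    refine ⟨u, Or.inl hu, v, Or.inr hv, fun n => ?_⟩
    simpa only [mul_add] using abs_sin_add_le' (π * n * u) (π * n * v)
  · intro h
    obtain ⟨a₀, ha₀⟩ := hA
    obtain ⟨b₀, hb₀⟩ := hB
    refine (((h.hasBoundedSineSums.insert a₀).insert b₀).of_le_add ?_).isBSet
    rintro z (hz | hz)
    · refine ⟨z + b₀, Or.inr (Or.inr (Set.add_mem_add hz hb₀)), b₀, Or.inl rfl, fun n => ?_⟩
      simpa only [← mul_sub, add_sub_cancel_right]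
        using abs_sin_sub_le' (π * n * (z + b₀)) (π * n * b₀)
    · refine ⟨a₀ + z, Or.inr (Or.inr (Set.add_mem_add ha₀ hz)), a₀, Or.inr (Or.inl rfl),
        fun n => ?_⟩
      simpa only [← mul_sub, add_sub_cancel_left]
        using abs_sin_sub_le' (π * n * (a₀ + z)) (π * n * a₀)
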